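/- Let η > 0 and λ > 0 be real numbers, and let β be the unique solution in (0, π/2) of β·tan β = η. Every complex number z satisfying the characteristic equation z² + ηz + ηλ·e^(−z) = 0 has strictly negative real part if and only if λ < β / sin β. -/

import Mathlib

open Real

/-!
Write `z = x + iy` and `K = ηλ`. The characteristic equation says that `z (z + η) e^{iy}` is the
negative real number `-K e^{-x}`. The critical gain is `K⋆ = β² / cos β`, for which `z = iβ` is a
root.

*Sufficiency.* Let `x ≥ 0`; by conjugation symmetry `y ≥ 0`, and `y = 0` is impossible by positivity.
If `0 < y < β`, the argument of `z (z + η) e^{iy}` lies strictly between `0` and `π`: its imaginary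
part is at least `y (η cos y - y sin y) > 0`. If `y ≥ β`, comparing moduli gives
`K ≥ |z| |z + η| ≥ β √(β² + η²) = K⋆` (`no_root_upper`).

*Necessity.* For `y ∈ [β, π)`, the vanishing of the imaginary part of `z (z + η) e^{iy}` is a
quadratic equation in `x` with positive leading coefficient `sin y` and nonpositive constant term.
Its larger root `x(y)` is nonnegative, depends continuously on `y`, and satisfies `x(β) = 0`. On this
curve the remaining condition is `y (2 x(y) + η) e^{x(y)} = K sin y`. The left side is at most the
right side at `y = β` when `K ≥ K⋆`, and exceeds it near `y = π`, so the intermediate value theorem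
provides a root with `x ≥ 0` (`exists_root`).
-/

/-- The characteristic equation split into real and imaginary parts. -/
lemma char_eq_iff (η lam x y : ℝ) :
    ((⟨x, y⟩ : ℂ) ^ 2 + (η : ℂ) * ⟨x, y⟩ + (η : ℂ) * (lam : ℂ) * Complex.exp (-⟨x, y⟩) = 0) ↔
      x ^ 2 - y ^ 2 + η * x + η * lam * exp (-x) * cos y = 0 ∧
      y * (2 * x + η) - η * lam * exp (-x) * sin y = 0 := by
  rw [Complex.ext_iff]
  simp only [pow_two, Complex.add_re, Complex.add_im, Complex.mul_re, Complex.mul_im,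
    Complex.ofReal_re, Complex.ofReal_im, Complex.exp_re, Complex.exp_im, Complex.neg_re,
    Complex.neg_im, Complex.zero_re, Complex.zero_im, Real.cos_neg, Real.sin_neg]
  constructor
  · rintro ⟨h1, h2⟩
    constructor <;> linarith
  · rintro ⟨h1, h2⟩
    constructor <;> linarith

/-- Below the critical gain there is no root in the part `x ≥ 0`, `y > 0` of the plane. The
condition `η cos β = β sin β` is `β tan β = η` cleared of its denominator. -/
lemma no_root_upper {η lam β x y : ℝ} (hη : 0 < η) (hlam : 0 < lam) (hβ0 : 0 < β)
    (hβ1 : β < π / 2) (hβ : η * cos β = β * sin β) (hl : lam * sin β < β)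
    (hx : 0 ≤ x) (hy : 0 < y)
    (h1 : x ^ 2 - y ^ 2 + η * x + η * lam * exp (-x) * cos y = 0)
    (h2 : y * (2 * x + η) - η * lam * exp (-x) * sin y = 0) : False := by
  rcases lt_or_ge y β with hyβ | hyβ
  · have hs : 0 < sin y := sin_pos_of_pos_of_lt_pi hy (by linarith)
    have hss : sin y < sin β := sin_lt_sin_of_lt_of_le_pi_div_two (by linarith) hβ1.le hyβ
    have hcc : cos β < cos y := cos_lt_cos_of_nonneg_of_le_pi hy.le (by linarith) hyβ
    have hc : 0 < cos y := cos_pos_of_mem_Ioo ⟨by linarith, by linarith⟩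
    have him : (x ^ 2 - y ^ 2 + η * x) * sin y + y * (2 * x + η) * cos y = 0 := by
      linear_combination sin y * h1 + cos y * h2
    have hlt : y * sin y < η * cos y := by
      calc y * sin y < β * sin β := mul_lt_mul hyβ hss.le hs hβ0.le
        _ = η * cos β := hβ.symm
        _ < η * cos y := by gcongr
    have hpos : 0 < y * (η * cos y - y * sin y) := mul_pos hy (by linarith)
    have hnn : 0 ≤ (x ^ 2 + η * x) * sin y + 2 * x * y * cos y := by positivity
    linarith
  · have hs : 0 < sin β := sin_pos_of_pos_of_lt_pi hβ0 (by linarith)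
    have hc : 0 < cos β := cos_pos_of_mem_Ioo ⟨by linarith, hβ1⟩
    have hmod : (η * lam * exp (-x)) ^ 2 = (x ^ 2 + y ^ 2) * ((x + η) ^ 2 + y ^ 2) := by
      have e1 : η * lam * exp (-x) * cos y = -(x ^ 2 - y ^ 2 + η * x) := by linarith
      have e2 : η * lam * exp (-x) * sin y = y * (2 * x + η) := by linarith
      calc (η * lam * exp (-x)) ^ 2
          = (η * lam * exp (-x) * cos y) ^ 2 + (η * lam * exp (-x) * sin y) ^ 2 := by
            linear_combination -(η * lam * exp (-x)) ^ 2 * sin_sq_add_cos_sq y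
        _ = _ := by rw [e1, e2]; ring
    have hle : (η * lam * exp (-x)) ^ 2 ≤ (η * lam) ^ 2 := by
      have : exp (-x) ≤ 1 := exp_le_one_iff.mpr (by linarith)
      exact pow_le_pow_left₀ (by positivity) (mul_le_of_le_one_right (by positivity) this) 2
    have hge : β ^ 2 * (η ^ 2 + β ^ 2) ≤ (x ^ 2 + y ^ 2) * ((x + η) ^ 2 + y ^ 2) := by
      have a1 : β ^ 2 ≤ x ^ 2 + y ^ 2 := by nlinarith
      have a2 : η ^ 2 + β ^ 2 ≤ (x + η) ^ 2 + y ^ 2 := by nlinarith [mul_nonneg hx hη.le]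
      gcongr
    have hcrit : cos β ^ 2 * (β ^ 2 * (η ^ 2 + β ^ 2)) = (β ^ 2) ^ 2 := by
      linear_combination β ^ 2 * (η * cos β + β * sin β) * hβ + β ^ 4 * sin_sq_add_cos_sq β
    have hK : η * lam * cos β < β ^ 2 := by
      calc η * lam * cos β = β * (lam * sin β) := by linear_combination lam * hβ
        _ < β * β := by gcongr
        _ = β ^ 2 := by ring
    have hK2 : (η * lam * cos β) ^ 2 < (β ^ 2) ^ 2 := by gcongr
    have : cos β ^ 2 * (β ^ 2 * (η ^ 2 + β ^ 2)) ≤ cos β ^ 2 * (η * lam) ^ 2 := by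
      gcongr
      linarith
    nlinarith

/-- At or above the critical gain there is a root with nonnegative real part. -/
lemma exists_root {η lam β : ℝ} (hη : 0 < η) (hlam : 0 < lam) (hβ0 : 0 < β)
    (hβ1 : β < π / 2) (hβ : η * cos β = β * sin β) (hl : β ≤ lam * sin β) :
    ∃ x y : ℝ, 0 ≤ x ∧
      x ^ 2 - y ^ 2 + η * x + η * lam * exp (-x) * cos y = 0 ∧
      y * (2 * x + η) - η * lam * exp (-x) * sin y = 0 := by
  -- The coefficients `b`, `c` of the quadratic `sin y * x ^ 2 + b y * x + c y`, and its larger root.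
  let b : ℝ → ℝ := fun y => η * sin y + 2 * y * cos y
  let c : ℝ → ℝ := fun y => y * (η * cos y - y * sin y)
  let X : ℝ → ℝ := fun y => (-b y + √(b y ^ 2 - 4 * sin y * c y)) / (2 * sin y)
  let H : ℝ → ℝ := fun y => y * (2 * X y + η) * exp (X y) - η * lam * sin y
  -- Since `sin δ ≤ δ ≤ β / lam`, the endpoint `π - δ` is close enough to `π` for `H` to be `≥ 0`.
  let δ : ℝ := min (π / 2) (β / lam)
  have hδ0 : 0 < δ := lt_min (by positivity) (by positivity)
  have hδ1 : δ ≤ π / 2 := min_le_left _ _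
  have hδ2 : δ ≤ β / lam := min_le_right _ _
  have hβδ : β ≤ π - δ := by linarith
  have hsin : ∀ y ∈ Set.Icc β (π - δ), 0 < sin y := fun y hy =>
    sin_pos_of_pos_of_lt_pi (by linarith [hy.1]) (by linarith [hy.2])
  have hc : ∀ y ∈ Set.Icc β (π - δ), c y ≤ 0 := by
    intro y hy
    have hs := hsin y hy
    have hy0 : 0 < y := by linarith [hy.1]
    have key : η * cos y ≤ y * sin y := by
      rcases le_total y (π / 2) with h | h
      · have hss : sin β ≤ sin y := sin_le_sin_of_le_of_le_pi_div_two (by linarith) h hy.1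
        have hcc : cos y ≤ cos β := cos_le_cos_of_nonneg_of_le_pi hβ0.le (by linarith) hy.1
        have hsβ : 0 < sin β := sin_pos_of_pos_of_lt_pi hβ0 (by linarith)
        calc η * cos y ≤ η * cos β := by gcongr
          _ = β * sin β := hβ
          _ ≤ y * sin y := mul_le_mul hy.1 hss hsβ.le hy0.le
      · have hcn : cos y ≤ 0 := cos_nonpos_of_pi_div_two_le_of_le h (by linarith [hy.2])
        exact (mul_nonpos_of_nonneg_of_nonpos hη.le hcn).trans (by positivity)
    exact mul_nonpos_of_nonneg_of_nonpos hy0.le (by linarith)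
  have hdisc : ∀ y ∈ Set.Icc β (π - δ), b y ^ 2 ≤ b y ^ 2 - 4 * sin y * c y := by
    intro y hy
    have := mul_nonneg (hsin y hy).le (neg_nonneg.mpr (hc y hy))
    linarith
  have hX0 : ∀ y ∈ Set.Icc β (π - δ), 0 ≤ X y := by
    intro y hy
    have hs := hsin y hy
    refine div_nonneg ?_ (by positivity)
    have := abs_le_sqrt (hdisc y hy)
    linarith [le_abs_self (b y)]
  have hXroot : ∀ y ∈ Set.Icc β (π - δ), sin y * (X y) ^ 2 + b y * X y + c y = 0 := by
    intro y hy
    have hs := hsin y hy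
    have hsq := sq_sqrt ((sq_nonneg (b y)).trans (hdisc y hy))
    have hX : 2 * sin y * X y + b y = √(b y ^ 2 - 4 * sin y * c y) := by
      simp only [X]; field_simp; ring
    have h4 : 4 * sin y * (sin y * (X y) ^ 2 + b y * X y + c y) = 0 := by
      rw [← hX] at hsq
      linear_combination hsq
    rcases mul_eq_zero.mp h4 with h | h
    · linarith
    · exact h
  have hXcont : ContinuousOn X (Set.Icc β (π - δ)) := by
    refine ContinuousOn.div (by fun_prop) (by fun_prop) fun y hy => ?_
    have := hsin y hy
    positivity
  have hHcont : ContinuousOn H (Set.Icc β (π - δ)) := by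
    fun_prop
  have hHβ : H β ≤ 0 := by
    have hcβ : c β = 0 := by simp only [c]; rw [hβ]; ring
    have hbβ : 0 ≤ b β := by
      have : 0 < cos β := cos_pos_of_mem_Ioo ⟨by linarith, hβ1⟩
      have := hsin β ⟨le_rfl, hβδ⟩
      positivity
    have hXβ : X β = 0 := by
      simp only [X]
      rw [hcβ, mul_zero, sub_zero, sqrt_sq hbβ]
      simp
    simp only [H]
    rw [hXβ, exp_zero]
    nlinarith
  have hHδ : 0 ≤ H (π - δ) := by
    have hX := hX0 (π - δ) ⟨hβδ, le_rfl⟩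
    have h1 : lam * sin (π - δ) ≤ β := by
      rw [sin_pi_sub]
      calc lam * sin δ ≤ lam * (β / lam) := by
            gcongr
            exact (sin_le hδ0.le).trans hδ2
        _ = β := by field_simp
    have h2 : η * β ≤ (π - δ) * (2 * X (π - δ) + η) * exp (X (π - δ)) := by
      calc η * β = β * (2 * 0 + η) * 1 := by ring
        _ ≤ _ := by
          have := one_le_exp hX
          have hy0 : 0 ≤ π - δ := hβ0.le.trans hβδ
          have hfac : 0 ≤ (π - δ) * (2 * X (π - δ) + η) := mul_nonneg hy0 (by linarith)
          gcongr
    have h3 := mul_le_mul_of_nonneg_left h1 hη.le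
    simp only [H]
    linarith
  obtain ⟨y, hy, hHy⟩ := intermediate_value_Icc hβδ hHcont ⟨hHβ, hHδ⟩
  have hs := hsin y hy
  have hB : y * (2 * X y + η) - η * lam * exp (-X y) * sin y = 0 := by
    have he : exp (X y) * exp (-X y) = 1 := by rw [← exp_add]; simp
    simp only [H] at hHy
    linear_combination exp (-X y) * hHy - y * (2 * X y + η) * he
  refine ⟨X y, y, hX0 y hy, ?_, hB⟩
  have hr := hXroot y hy
  simp only [b, c] at hr
  refine (mul_eq_zero.mp (?_ : sin y * _ = 0)).resolve_left hs.ne'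
  linear_combination hr - cos y * hB

/-- Stability of the delayed double integrator: every root of
`z² + ηz + ηλ e^{-z}` has negative real part iff `λ < β / sin β`, where
`β ∈ (0, π/2)` is the unique solution of `β tan β = η`. -/
theorem continuous_double_integrator_stability (η lam β : ℝ)
    (hη : 0 < η) (hlam : 0 < lam)
    (hβ : β ∈ Set.Ioo (0 : ℝ) (π / 2)) (hβeq : β * Real.tan β = η) :
    (∀ z : ℂ, z ^ 2 + (η : ℂ) * z + (η : ℂ) * (lam : ℂ) * Complex.exp (-z) = 0 →
        z.re < 0) ↔
      lam < β / Real.sin β := by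
  obtain ⟨hβ0, hβ1⟩ := hβ
  have hs : 0 < sin β := sin_pos_of_pos_of_lt_pi hβ0 (by linarith)
  have hc : 0 < cos β := cos_pos_of_mem_Ioo ⟨by linarith, hβ1⟩
  have hβ' : η * cos β = β * sin β := by
    rw [← hβeq, mul_assoc, tan_mul_cos hc.ne']
  rw [lt_div_iff₀ hs]
  constructor
  · intro h
    by_contra! hl
    obtain ⟨x, y, hx, h1, h2⟩ := exists_root hη hlam hβ0 hβ1 hβ' hl
    have := h ⟨x, y⟩ ((char_eq_iff η lam x y).mpr ⟨h1, h2⟩)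
    exact absurd this (not_lt.mpr hx)
  · rintro hl ⟨x, y⟩ hz
    obtain ⟨h1, h2⟩ := (char_eq_iff η lam x y).mp hz
    by_contra! hx
    change 0 ≤ x at hx
    rcases lt_trichotomy y 0 with hy | rfl | hy
    · -- The conjugate root `x - iy` lies in the upper half-plane.
      refine no_root_upper hη hlam hβ0 hβ1 hβ' hl hx (neg_pos.mpr hy) ?_ ?_
      · rw [cos_neg]; linarith
      · rw [sin_neg]; linarith
    · rw [cos_zero] at h1
      have : 0 < η * lam * exp (-x) := by positivity
      nlinarith [mul_nonneg hη.le hx, sq_nonneg x]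
    · exact no_root_upper hη hlam hβ0 hβ1 hβ' hl hx hy h1 h2
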